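/- For all planar binary trees u ∈ Y_p and v ∈ Y_q one has u/v ≤ u\v in the weak order on Y_{p+q}. -/

import Mathlib

/-- Planar binary trees: `leaf` is the tree `|` (no interior vertex) and
`node l r = l ∨ r` is the grafting of `l` and `r` (their roots are joined to a new
vertex, which becomes the root). -/
inductive PBTree : Type
  | leaf : PBTree
  | node : PBTree → PBTree → PBTree
deriving DecidableEq

/-- The number of interior vertices of a planar binary tree: `t ∈ Yₙ` iff `t.size = n`. -/
def PBTree.size : PBTree → ℕ
  | .leaf => 0
  | .node l r => l.size + r.size + 1

/-- The weak order on planar binary trees, generated transitively by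
(a) `u ≤ u' → v ≤ v' → u∨v ≤ u'∨v'` and (b) `(u∨v)∨w ≤ u∨(v∨w)`. -/
inductive TreeLe : PBTree → PBTree → Prop
  | refl (t : PBTree) : TreeLe t t
  | graft {u u' v v' : PBTree} : TreeLe u u' → TreeLe v v' →
      TreeLe (.node u v) (.node u' v')
  | rotate (u v w : PBTree) : TreeLe (.node (.node u v) w) (.node u (.node v w))
  | trans {a b c : PBTree} : TreeLe a b → TreeLe b c → TreeLe a c

/-- The `over` operation on trees: `u / v` is obtained by identifying the root of `u`
with the leftmost leaf of `v`; recursively `u / | = u` and `u / (vˡ∨vʳ) = (u/vˡ) ∨ vʳ`. -/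
def treeOver : PBTree → PBTree → PBTree
  | u, .leaf => u
  | u, .node vl vr => .node (treeOver u vl) vr

/-- The `under` operation on trees: `u \ v` is obtained by identifying the rightmost leaf
of `u` with the root of `v`; recursively `| \ v = v` and `(uˡ∨uʳ) \ v = uˡ ∨ (uʳ\v)`. -/
def treeUnder : PBTree → PBTree → PBTree
  | .leaf, v => v
  | .node ul ur, v => .node ul (treeUnder ur v)

/-!
Since `u / (vˡ ∨ vʳ) = (u / vˡ) ∨ vʳ`, induction on `v` bounds `u / v` by `(u \ vˡ) ∨ vʳ`. Rotations
at the vertices on the right branch of `u` then move the new root, one vertex at a time, down to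
the end of that branch, which turns this tree into `u \ (vˡ ∨ vʳ)`.
-/

theorem treeUnder_leaf (u : PBTree) : treeUnder u .leaf = u := by
  induction u with
  | leaf => rfl
  | node ul ur _ ih => rw [treeUnder, ih]

theorem node_treeUnder_le_treeUnder_node (u v w : PBTree) :
    TreeLe (.node (treeUnder u v) w) (treeUnder u (.node v w)) := by
  induction u with
  | leaf => exact .refl _
  | node ul ur _ ih =>
    have rotate_root : TreeLe (.node (.node ul (treeUnder ur v)) w)
        (.node ul (.node (treeUnder ur v) w)) := .rotate _ _ _
    have descend : TreeLe (.node ul (.node (treeUnder ur v) w))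
        (.node ul (treeUnder ur (.node v w))) := .graft (.refl ul) ih
    exact rotate_root.trans descend

/-- Lemma 2.3: for all planar binary trees `u ∈ Y_p` and `v ∈ Y_q` one
has `u/v ≤ u\v` in the weak order on `Y_{p+q}`. -/
theorem stmt11 (u v : PBTree) : TreeLe (treeOver u v) (treeUnder u v) := by
  induction v with
  | leaf =>
    rw [treeOver, treeUnder_leaf]
    exact .refl u
  | node vl vr ih _ =>
    have graft_ih : TreeLe (.node (treeOver u vl) vr) (.node (treeUnder u vl) vr) :=
      .graft ih (.refl vr)
    exact graft_ih.trans (node_treeUnder_le_treeUnder_node u vl vr)
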